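/- For every real number q > 1, ∫₀¹ (x^{q-2} + 1)·log(x^q + 1)/(x^q + 1) dx = (1/(4q))·(ψ'((2q-1)/(2q)) − ψ'((q-1)/(2q))) − (π/(q·sin(π/q)))·(ψ(1 − 1/q) − ψ(1)). -/

import Mathlib

/-- The digamma function ψ(x) = Γ'(x)/Γ(x). -/
noncomputable def digamma (x : ℝ) : ℝ := deriv Real.Gamma x / Real.Gamma x

/-- The trigamma function ψ'(x), the derivative of the digamma function. -/
noncomputable def trigamma (x : ℝ) : ℝ := deriv digamma x


open Set Filter Topology MeasureTheory

lemma aux_diffGamma {x : ℝ} (hx : 0 < x) : DifferentiableAt ℝ Real.Gamma x := by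
  apply Real.differentiableAt_Gamma
  intro m h
  have : (0:ℝ) ≤ m := Nat.cast_nonneg m
  linarith

lemma aux_digamma_add_one {x : ℝ} (hx : 0 < x) : digamma (x + 1) = digamma x + 1 / x := by
  have h1 : HasDerivAt (fun y => Real.Gamma (y + 1)) (deriv Real.Gamma (x + 1)) x :=
    (aux_diffGamma (by linarith : 0 < x + 1)).hasDerivAt.comp_add_const x 1
  have h2 : HasDerivAt (fun y => y * Real.Gamma y) (1 * Real.Gamma x + x * deriv Real.Gamma x) x :=
    (hasDerivAt_id x).mul (aux_diffGamma hx).hasDerivAt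
  have h3 : (fun y => Real.Gamma (y + 1)) =ᶠ[𝓝 x] (fun y => y * Real.Gamma y) := by
    filter_upwards [lt_mem_nhds hx] with y hy
    exact Real.Gamma_add_one hy.ne'
  have h4 := h1.unique (h2.congr_of_eventuallyEq h3)
  have h5 := (Real.Gamma_pos_of_pos hx).ne'
  unfold digamma
  rw [h4, Real.Gamma_add_one hx.ne']
  field_simp
  ring

lemma aux_digamma_mono : MonotoneOn digamma (Ioi 0) := by
  have hd : ∀ x ∈ Ioi (0:ℝ), HasDerivAt (Real.log ∘ Real.Gamma) (digamma x) x := by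
    intro x hx
    have := (aux_diffGamma hx).hasDerivAt.log (Real.Gamma_pos_of_pos hx).ne'
    exact this
  have := Real.convexOn_log_Gamma.monotoneOn_deriv (fun x hx => (hd x hx).differentiableAt)
  intro x hx y hy hxy
  have h := this hx hy hxy
  rwa [(hd x hx).deriv, (hd y hy).deriv] at h

lemma aux_digamma_add_nat {x : ℝ} (hx : 0 < x) (n : ℕ) :
    digamma (x + n) = digamma x + ∑ k ∈ Finset.range n, 1 / (x + k) := by
  induction n with
  | zero => simp
  | succ n ih =>
    have : 0 < x + n := by positivity
    rw [Finset.sum_range_succ, ← add_assoc, ← ih, ← aux_digamma_add_one this]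
    push_cast
    ring_nf

lemma aux_tend (k : ℕ) : Tendsto (fun n : ℕ => digamma ((n:ℝ) + 1 + k) - digamma (n + 1)) atTop (𝓝 0) := by
  have : (fun n : ℕ => digamma ((n:ℝ) + 1 + k) - digamma (n + 1)) =
      fun n : ℕ => ∑ j ∈ Finset.range k, 1 / ((n:ℝ) + (1 + j)) := by
    ext n
    rw [aux_digamma_add_nat (by positivity)]
    simp [add_assoc]
  rw [this]
  have h0 : (0:ℝ) = ∑ j ∈ Finset.range k, (0:ℝ) := by simp
  rw [h0]
  apply tendsto_finsetSum
  intro j _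
  simp only [one_div]
  exact tendsto_inv_atTop_zero.comp (tendsto_atTop_add_const_right _ _ tendsto_natCast_atTop_atTop)

lemma aux_tend2 {x : ℝ} (hx : 0 < x) :
    Tendsto (fun n : ℕ => digamma (x + n) - digamma (1 + n)) atTop (𝓝 0) := by
  rw [← tendsto_add_atTop_iff_nat 1]
  obtain ⟨m, hm⟩ := exists_nat_ge x
  have h1 : Tendsto (fun n : ℕ => -(digamma ((n:ℝ) + 1 + (1:ℕ)) - digamma (n + 1))) atTop (𝓝 0) := by
    simpa using (aux_tend 1).neg
  have h2 : Tendsto (fun n : ℕ => digamma ((n:ℝ) + 1 + m) - digamma (n + 1)) atTop (𝓝 0) := aux_tend m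
  refine tendsto_of_tendsto_of_tendsto_of_le_of_le h1 h2 ?_ ?_
  · intro n
    have a1 : digamma ((n:ℝ) + 1) ≤ digamma (x + ((n+1 : ℕ):ℝ)) :=
      aux_digamma_mono (mem_Ioi.2 (by positivity)) (mem_Ioi.2 (by positivity)) (by push_cast; linarith)
    have e : (1:ℝ) + ((n + 1 : ℕ):ℝ) = n + 1 + (1:ℕ) := by push_cast; ring
    simp only [e]
    linarith
  · intro n
    have a1 : digamma (x + ((n+1 : ℕ):ℝ)) ≤ digamma ((n:ℝ) + 1 + m) :=
      aux_digamma_mono (mem_Ioi.2 (by positivity)) (mem_Ioi.2 (by positivity)) (by push_cast; linarith)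
    have a2 : digamma ((n:ℝ) + 1) ≤ digamma (1 + ((n+1 : ℕ):ℝ)) :=
      aux_digamma_mono (mem_Ioi.2 (by positivity)) (mem_Ioi.2 (by positivity)) (by push_cast; linarith)
    show _ - _ ≤ _ - _
    linarith

lemma aux_summable {x : ℝ} (hx : 0 < x) : Summable (fun n : ℕ => 1 / ((n:ℝ) + x) ^ 2) := by
  have := (Real.summable_one_div_nat_add_rpow x 2).2 (by norm_num)
  refine this.congr fun n => ?_
  have : 0 < (n:ℝ) + x := by positivity
  rw [abs_of_pos this]
  norm_num

lemma aux_trigamma {x : ℝ} (hx : 0 < x) : HasSum (fun n : ℕ => 1 / ((n:ℝ) + x) ^ 2) (trigamma x) := by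
  obtain ⟨δ, hδ, hδx, hδ1⟩ : ∃ δ > 0, δ < x ∧ δ < 1 :=
    ⟨min x 1 / 2, by positivity, by have := min_le_left x 1; have : 0 < min x 1 := by positivity
                                    linarith [min_le_left x 1], by linarith [min_le_right x 1]⟩
  have hg : ∀ (n : ℕ) (y : ℝ), y ∈ Ioi δ →
      HasDerivAt (fun y : ℝ => 1 / (1 + (n:ℝ)) - 1 / (y + n)) (1 / ((n:ℝ) + y) ^ 2) y := by
    intro n y hy
    have hy0 : 0 < y := hδ.trans hy
    have h1 : HasDerivAt (fun y : ℝ => y + n) 1 y := (hasDerivAt_id y).add_const _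
    have h2 := (h1.inv (by positivity)).const_sub (1 / (1 + (n:ℝ)))
    simp only [one_div] at h2 ⊢
    refine HasDerivAt.congr_deriv h2 ?_
    rw [add_comm]; ring
  have hb : ∀ (n : ℕ) (y : ℝ), y ∈ Ioi δ → ‖1 / ((n:ℝ) + y) ^ 2‖ ≤ 1 / ((n:ℝ) + δ) ^ 2 := by
    intro n y hy
    have hy : δ < y := hy
    have hy0 : 0 < y := hδ.trans hy
    rw [Real.norm_of_nonneg (by positivity)]
    gcongr
  have hs0 : Summable (fun n : ℕ => 1 / (1 + (n:ℝ)) - 1 / ((1:ℝ) + n)) := by simp [summable_zero]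
  have hS := fun y hy => summable_of_summable_hasDerivAt_of_isPreconnected (aux_summable hδ) isOpen_Ioi
    isPreconnected_Ioi hg hb (mem_Ioi.2 hδ1) hs0 (y := y) hy
  have hD := hasDerivAt_tsum_of_isPreconnected (aux_summable hδ) isOpen_Ioi
    isPreconnected_Ioi hg hb (mem_Ioi.2 hδ1) hs0 (y := x) hδx
  have hE : digamma =ᶠ[𝓝 x] fun y => (∑' n : ℕ, (1 / (1 + (n:ℝ)) - 1 / (y + n))) + digamma 1 := by
    filter_upwards [lt_mem_nhds hδx] with y hy
    have hy0 : 0 < y := hδ.trans hy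
    have t1 := (hS y hy).hasSum.tendsto_sum_nat
    have t2 : Tendsto (fun n : ℕ => ∑ i ∈ Finset.range n, (1 / (1 + (i:ℝ)) - 1 / (y + i))) atTop
        (𝓝 (digamma y - digamma 1)) := by
      have := (tendsto_const_nhds (x := digamma y - digamma 1)).sub (aux_tend2 hy0)
      rw [sub_zero] at this
      refine this.congr fun n => ?_
      rw [aux_digamma_add_nat hy0, aux_digamma_add_nat one_pos, Finset.sum_sub_distrib]
      ring
    rw [tendsto_nhds_unique t1 t2]
    ring
  have := (hD.add_const (digamma 1)).congr_of_eventuallyEq hE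
  unfold trigamma
  rw [this.deriv]
  exact (aux_summable hx).hasSum

lemma aux_beta {a : ℝ} (h0 : 0 < a) (h1 : a < 1) :
    IntegrableOn (fun u : ℝ => u ^ (-a) * (1 - u) ^ (a - 1) * Real.log u) (Ioo 0 1) ∧
    ∫ u in Ioo (0:ℝ) 1, u ^ (-a) * (1 - u) ^ (a - 1) * Real.log u =
      Real.Gamma a * Real.Gamma (1 - a) * (digamma (1 - a) - digamma 1) := by
  set f : ℝ → ℂ := (Ioo (0:ℝ) 1).indicator (fun u => (((1 - u) ^ (a - 1) : ℝ) : ℂ)) with hf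
  have hint : IntegrableOn (fun u : ℝ => (1 - u) ^ (a - 1)) (Ioo 0 1) := by
    have := (intervalIntegral.intervalIntegrable_rpow' (a := 0) (b := 1)
      (by linarith : -1 < a - 1)).comp_sub_left 1
    simp only [sub_zero, sub_self] at this
    exact ((intervalIntegrable_iff_integrableOn_Ioo_of_le zero_le_one).1 this.symm)
  have hfi : Integrable f := by
    rw [hf, integrable_indicator_iff measurableSet_Ioo]
    exact Integrable.ofReal hint
  have hloc : LocallyIntegrableOn f (Ioi 0) := hfi.locallyIntegrable.locallyIntegrableOn _
  have htop : f =O[atTop] (fun t : ℝ => t ^ (-(2:ℝ))) := by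
    have : f =ᶠ[atTop] fun _ => (0:ℂ) := by
      filter_upwards [eventually_ge_atTop (1:ℝ)] with x hx
      simp [hf, hx.not_gt]
    exact this.trans_isBigO (Asymptotics.isBigO_zero _ _)
  have hbot : f =O[𝓝[>] 0] (fun t : ℝ => t ^ (-(0:ℝ))) := by
    simp only [neg_zero, Real.rpow_zero]
    have hc : ContinuousAt (fun u : ℝ => (((1 - u) ^ (a - 1) : ℝ) : ℂ)) 0 := by
      apply Complex.continuous_ofReal.continuousAt.comp
      apply ContinuousAt.rpow_const (by fun_prop)
      left; norm_num
    have hO : (fun u : ℝ => (((1 - u) ^ (a - 1) : ℝ) : ℂ)) =O[𝓝[>] 0] (fun _ : ℝ => (1:ℝ)) :=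
      (hc.tendsto.mono_left nhdsWithin_le_nhds).isBigO_one ℝ
    refine Filter.EventuallyEq.trans_isBigO ?_ hO
    filter_upwards [Ioo_mem_nhdsGT (zero_lt_one' ℝ)] with x hx
    simp only [hf, indicator_of_mem hx]
  have key : ∀ (x : ℝ) (g : ℝ → ℝ),
      (fun t : ℝ => (t:ℂ) ^ ((x:ℂ) - 1) • (g t • f t)) =
      (Ioo (0:ℝ) 1).indicator (fun u => ((u ^ (x - 1) * (1 - u) ^ (a - 1) * g u : ℝ) : ℂ)) := by
    intro x g
    ext t
    by_cases ht : t ∈ Ioo (0:ℝ) 1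
    · simp only [hf, indicator_of_mem ht]
      rw [Complex.ofReal_mul, Complex.ofReal_mul, Complex.ofReal_cpow ht.1.le]
      simp only [smul_eq_mul, Complex.real_smul]
      push_cast
      ring
    · simp [hf, indicator_of_notMem ht]
  have hsub : Ioi (0:ℝ) ∩ Ioo 0 1 = Ioo 0 1 := by
    ext x; simp
  have key2 : ∀ (x : ℝ) (g : ℝ → ℝ), mellin (fun t => g t • f t) x =
      ((∫ u in Ioo (0:ℝ) 1, u ^ (x - 1) * (1 - u) ^ (a - 1) * g u : ℝ) : ℂ) := by
    intro x g
    rw [mellin, key, setIntegral_indicator measurableSet_Ioo, hsub]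
    exact integral_ofReal
  obtain ⟨hc, hd⟩ := mellin_hasDerivAt_of_isBigO_rpow (s := ((1 - a : ℝ) : ℂ)) hloc htop
    (by simp; linarith) hbot (by simp; linarith)
  have hx1 : (1 - a) - 1 = -a := by ring
  refine ⟨?_, ?_⟩
  · rw [MellinConvergent, key, IntegrableOn, integrable_indicator_iff measurableSet_Ioo,
      IntegrableOn, Measure.restrict_restrict measurableSet_Ioo, inter_comm, hsub, hx1] at hc
    have := hc.re
    simpa [IntegrableOn] using this
  · have hd2 := hd.real_of_complex
    rw [key2, Complex.ofReal_re, hx1] at hd2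
    have hE : (fun x : ℝ => (mellin f x).re) =ᶠ[𝓝 (1 - a)]
        fun x => Real.Gamma x * Real.Gamma a / Real.Gamma (x + a) := by
      filter_upwards [lt_mem_nhds (by linarith : 0 < 1 - a)] with x hx
      have e1 : mellin f x = Complex.betaIntegral x a := by
        have := key x (fun _ => 1)
        simp only [one_smul, mul_one] at this
        rw [mellin, this, setIntegral_indicator measurableSet_Ioo, hsub, Complex.betaIntegral,
          intervalIntegral.integral_of_le zero_le_one, integral_Ioc_eq_integral_Ioo]
        refine setIntegral_congr_fun measurableSet_Ioo fun t ht => ?_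
        have : 0 ≤ 1 - t := by linarith [ht.2]
        rw [Complex.ofReal_mul, Complex.ofReal_cpow ht.1.le, Complex.ofReal_cpow this]
        push_cast
        rfl
      rw [e1, Complex.betaIntegral_eq_Gamma_mul_div _ _ (by simpa) (by simpa), ← Complex.ofReal_add]
      simp only [Complex.Gamma_ofReal]
      rw [← Complex.ofReal_mul, ← Complex.ofReal_div, Complex.ofReal_re]
    have hA := (aux_diffGamma (by linarith : 0 < 1 - a)).hasDerivAt
    have hB : HasDerivAt (fun x => Real.Gamma (x + a)) (deriv Real.Gamma (1 - a + a)) (1 - a) :=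
      (aux_diffGamma (by linarith : 0 < 1 - a + a)).hasDerivAt.comp_add_const _ _
    have hC := (hA.mul_const (Real.Gamma a)).fun_div hB (by simp)
    have := (hd2.congr_of_eventuallyEq hE.symm).unique hC
    have hne := (Real.Gamma_pos_of_pos (by linarith : 0 < 1 - a)).ne'
    rw [this]
    simp only [sub_add_cancel, Real.Gamma_one, digamma]
    field_simp

lemma aux_C0 {r : ℝ} (hr : 0 < r) :
    IntegrableOn (fun x : ℝ => x ^ (r - 1) * (-Real.log x)) (Ioo 0 1) ∧
    ∫ x in Ioo (0:ℝ) 1, x ^ (r - 1) * (-Real.log x) = 1 / r ^ 2 := by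
  set F : ℝ → ℝ := fun x => -((x ^ r * Real.log (x ^ r) - x ^ r) / r ^ 2) with hF
  have hcr : Continuous (fun x : ℝ => x ^ r) := Real.continuous_rpow_const hr.le
  have hc : Continuous F := by
    have := Real.continuous_mul_log.comp hcr
    exact ((this.sub hcr).div_const _).neg
  have hd : ∀ x ∈ Ioo (0:ℝ) 1, HasDerivAt F (x ^ (r - 1) * (-Real.log x)) x := by
    intro x hx
    have hxr : 0 < x ^ r := Real.rpow_pos_of_pos hx.1 r
    have h1 : HasDerivAt (fun x : ℝ => x ^ r) (r * x ^ (r - 1)) x :=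
      Real.hasDerivAt_rpow_const (Or.inl hx.1.ne')
    have h2 := (((h1.fun_mul (h1.log hxr.ne')).fun_sub h1).div_const (r ^ 2)).fun_neg
    refine h2.congr_deriv ?_
    rw [Real.log_rpow hx.1]
    field_simp
    ring
  have hi := intervalIntegral.integrableOn_deriv_of_nonneg hc.continuousOn hd (by
    intro x hx
    have := Real.log_nonpos hx.1.le hx.2.le
    have := Real.rpow_nonneg hx.1.le (r - 1)
    apply mul_nonneg <;> linarith)
  refine ⟨hi.mono_set Ioo_subset_Ioc_self, ?_⟩
  rw [← integral_Ioc_eq_integral_Ioo, ← intervalIntegral.integral_of_le zero_le_one,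
    intervalIntegral.integral_eq_sub_of_hasDerivAt_of_le zero_le_one hc.continuousOn hd
    ((intervalIntegrable_iff_integrableOn_Ioc_of_le zero_le_one).2 hi)]
  simp [hF, Real.zero_rpow hr.ne']
  ring

lemma aux_C1 {q : ℝ} (hq : 1 < q) :
    IntegrableOn (fun x : ℝ => x ^ (q - 2) * (-Real.log x) / (x ^ q + 1)) (Ioo 0 1) ∧
    ∫ x in Ioo (0:ℝ) 1, x ^ (q - 2) * (-Real.log x) / (x ^ q + 1) =
      1 / (4 * q ^ 2) * (trigamma ((q - 1) / (2 * q)) - trigamma ((2 * q - 1) / (2 * q))) := by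
  have hq0 : 0 < q := by linarith
  set F : ℕ → ℝ → ℝ := fun n x => x ^ ((q - 1 + 2 * n * q) - 1) * (-Real.log x)
    - x ^ ((2 * q - 1 + 2 * n * q) - 1) * (-Real.log x) with hF
  have hp1 : ∀ n : ℕ, 0 < q - 1 + 2 * n * q := fun n => by
    have : 0 ≤ 2 * (n:ℝ) * q := by positivity
    linarith
  have hp2 : ∀ n : ℕ, 0 < 2 * q - 1 + 2 * n * q := fun n => by
    have : 0 ≤ 2 * (n:ℝ) * q := by positivity
    linarith
  have hFe : ∀ n, ∀ x ∈ Ioo (0:ℝ) 1,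
      F n x = (x ^ (q - 2) * (-Real.log x) * (1 - x ^ q)) * ((x ^ q) ^ 2) ^ n := by
    intro n x hx
    have e1 : x ^ ((q - 1 + 2 * n * q) - 1) = x ^ (q - 2) * ((x ^ q) ^ 2) ^ n := by
      rw [← pow_mul, ← Real.rpow_natCast, ← Real.rpow_mul hx.1.le, ← Real.rpow_add hx.1]
      congr 1; push_cast; ring
    have e2 : x ^ ((2 * q - 1 + 2 * n * q) - 1) = x ^ (q - 2) * x ^ q * ((x ^ q) ^ 2) ^ n := by
      rw [← pow_mul, ← Real.rpow_natCast, ← Real.rpow_mul hx.1.le, ← Real.rpow_add hx.1,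
        ← Real.rpow_add hx.1]
      congr 1; push_cast; ring
    simp only [hF]
    rw [e1, e2]; ring
  have hFi : ∀ n, Integrable (F n) (volume.restrict (Ioo 0 1)) := fun n =>
    (aux_C0 (hp1 n)).1.sub (aux_C0 (hp2 n)).1
  have hFI : ∀ n, ∫ x in Ioo (0:ℝ) 1, F n x = 1 / (4 * q ^ 2) *
      (1 / ((n:ℝ) + (q - 1) / (2 * q)) ^ 2 - 1 / ((n:ℝ) + (2 * q - 1) / (2 * q)) ^ 2) := by
    intro n
    simp only [hF]
    rw [integral_sub (aux_C0 (hp1 n)).1 (aux_C0 (hp2 n)).1, (aux_C0 (hp1 n)).2, (aux_C0 (hp2 n)).2]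
    have e1 : (n:ℝ) + (q - 1) / (2 * q) = (q - 1 + 2 * n * q) / (2 * q) := by field_simp; ring
    have e2 : (n:ℝ) + (2 * q - 1) / (2 * q) = (2 * q - 1 + 2 * n * q) / (2 * q) := by
      field_simp; ring
    have := (hp1 n).ne'
    have := (hp2 n).ne'
    rw [e1, e2]
    generalize q - 1 + 2 * n * q = A at *
    generalize 2 * q - 1 + 2 * n * q = B at *
    field_simp
    ring
  have hS : HasSum (fun n => ∫ x in Ioo (0:ℝ) 1, F n x) (1 / (4 * q ^ 2) *
      (trigamma ((q - 1) / (2 * q)) - trigamma ((2 * q - 1) / (2 * q)))) := by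
    simp only [hFI]
    exact ((aux_trigamma (div_pos (by linarith) (by linarith))).sub
      (aux_trigamma (div_pos (by linarith) (by linarith)))).mul_left _
  have hxq : ∀ x ∈ Ioo (0:ℝ) 1, 0 < x ^ q ∧ x ^ q < 1 := fun x hx =>
    ⟨Real.rpow_pos_of_pos hx.1 q, Real.rpow_lt_one hx.1.le hx.2 hq0⟩
  have hnn : ∀ x ∈ Ioo (0:ℝ) 1, 0 ≤ x ^ (q - 2) * (-Real.log x) := by
    intro x hx
    have := Real.log_nonpos hx.1.le hx.2.le
    have := Real.rpow_nonneg hx.1.le (q - 2)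
    apply mul_nonneg <;> linarith
  have hN : ∀ n, ∫ x in Ioo (0:ℝ) 1, ‖F n x‖ = ∫ x in Ioo (0:ℝ) 1, F n x := by
    intro n
    refine setIntegral_congr_fun measurableSet_Ioo fun x hx => ?_
    have := hxq x hx
    have h3 : 0 ≤ 1 - x ^ q := by linarith
    apply Real.norm_of_nonneg
    rw [hFe n x hx]
    have := hnn x hx
    positivity
  have hH := hasSum_integral_of_summable_integral_norm hFi (by simp only [hN]; exact hS.summable)
  refine ⟨?_, ?_⟩
  · have hb := (aux_C0 (by linarith : 0 < q - 1)).1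
    have e : q - 1 - 1 = q - 2 := by ring
    rw [e] at hb
    refine Integrable.mono' hb ?_ ?_
    · apply Measurable.aestronglyMeasurable
      fun_prop
    · filter_upwards [ae_restrict_mem measurableSet_Ioo] with x hx
      have := hxq x hx
      have h2 := hnn x hx
      rw [Real.norm_of_nonneg (by have := this.1; positivity)]
      apply div_le_self h2
      linarith
  · rw [← hH.unique hS]
    refine setIntegral_congr_fun measurableSet_Ioo fun x hx => ?_
    have h1 := hxq x hx
    have h2 : (x ^ q) ^ 2 < 1 := by nlinarith
    have h3 : ∑' n, F n x = ∑' n : ℕ,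
        (x ^ (q - 2) * (-Real.log x) * (1 - x ^ q)) * ((x ^ q) ^ 2) ^ n :=
      tsum_congr fun n => hFe n x hx
    show _ = ∑' n, F n x
    rw [h3, tsum_mul_left, tsum_geometric_of_lt_one (by positivity) h2]
    have h4 : 1 - (x ^ q) ^ 2 = (1 - x ^ q) * (x ^ q + 1) := by ring
    have h5 : 1 - x ^ q ≠ 0 := by linarith
    have h6 : x ^ q + 1 ≠ 0 := by linarith
    rw [h4]
    generalize x ^ q = t at *
    field_simp

lemma aux_D {q : ℝ} (hq : 1 < q) :
    IntegrableOn (fun x : ℝ => Real.log (x ^ q + 1) / (x ^ q + 1) +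
      x ^ (q - 2) * (Real.log (x ^ q + 1) - q * Real.log x) / (x ^ q + 1)) (Ioo 0 1) ∧
    ∫ x in Ioo (0:ℝ) 1, (Real.log (x ^ q + 1) / (x ^ q + 1) +
      x ^ (q - 2) * (Real.log (x ^ q + 1) - q * Real.log x) / (x ^ q + 1)) =
    - (Real.pi / (q * Real.sin (Real.pi / q))) * (digamma (1 - 1 / q) - digamma 1) := by
  have hq0 : 0 < q := by linarith
  have ha0 : 0 < 1 / q := by positivity
  have ha1 : 1 / q < 1 := by rw [div_lt_one hq0]; exact hq
  obtain ⟨hbi, hbv⟩ := aux_beta ha0 ha1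
  set h : ℝ → ℝ := fun u : ℝ => u ^ (-(1 / q)) * (1 - u) ^ (1 / q - 1) * Real.log u with hh
  have hI : IntervalIntegrable h volume 0 1 :=
    (intervalIntegrable_iff_integrableOn_Ioo_of_le zero_le_one).2 hbi
  have hI1 : IntervalIntegrable h volume 0 (1/2) := hI.mono_set (by
    rw [uIcc_of_le, uIcc_of_le] <;> try norm_num
    exact Icc_subset_Icc le_rfl (by norm_num))
  have hI2 : IntervalIntegrable h volume (1/2) 1 := hI.mono_set (by
    rw [uIcc_of_le, uIcc_of_le] <;> try norm_num
    exact Icc_subset_Icc (by norm_num) le_rfl)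
  have hI3 : IntervalIntegrable (fun u => h (1 - u)) volume 0 (1/2) := by
    have := (hI2.comp_sub_left 1).symm
    norm_num at this
    simpa using this
  have hV3 : ∫ u in (0:ℝ)..(1/2), h (1 - u) = ∫ u in (1/2:ℝ)..1, h u := by
    rw [intervalIntegral.integral_comp_sub_left (fun u => h u)]
    norm_num
  have hV : ∫ u in (0:ℝ)..(1/2), (h u + h (1 - u)) = ∫ u in Ioo (0:ℝ) 1, h u := by
    rw [intervalIntegral.integral_add hI1 hI3, hV3,
      intervalIntegral.integral_add_adjacent_intervals hI1 hI2,
      intervalIntegral.integral_of_le zero_le_one, integral_Ioc_eq_integral_Ioo]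
  have hJ := hI1.add hI3
  rw [intervalIntegrable_iff_integrableOn_Ioo_of_le (by norm_num)] at hJ
  rw [intervalIntegral.integral_of_le (by norm_num), integral_Ioc_eq_integral_Ioo] at hV
  have hxq : ∀ x ∈ Ioo (0:ℝ) 1, 0 < x ^ q ∧ x ^ q < 1 := fun x hx =>
    ⟨Real.rpow_pos_of_pos hx.1 q, Real.rpow_lt_one hx.1.le hx.2 hq0⟩
  set φ : ℝ → ℝ := fun x => x ^ q / (x ^ q + 1) with hφ
  set φ' : ℝ → ℝ := fun x => q * x ^ (q - 1) / (x ^ q + 1) ^ 2 with hφ'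
  have hder : ∀ x ∈ Ioo (0:ℝ) 1, HasDerivWithinAt φ (φ' x) (Ioo 0 1) x := by
    intro x hx
    have h1 : HasDerivAt (fun x : ℝ => x ^ q) (q * x ^ (q - 1)) x :=
      Real.hasDerivAt_rpow_const (Or.inl hx.1.ne')
    have h0 := (hxq x hx).1
    have h2 := h1.fun_div (h1.add_const 1) (by positivity)
    refine (h2.congr_deriv ?_).hasDerivWithinAt
    simp only [hφ']
    congr 1
    ring
  have hinj : InjOn φ (Ioo 0 1) := by
    intro x hx y hy hxy
    have h1 := (hxq x hx).1
    have h2 := (hxq y hy).1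
    simp only [hφ] at hxy
    rw [div_eq_div_iff (by positivity) (by positivity)] at hxy
    have : x ^ q = y ^ q := by linarith
    exact (Real.rpow_left_inj hx.1.le hy.1.le hq0.ne').1 this
  have himg : φ '' (Ioo 0 1) = Ioo 0 (1/2) := by
    ext u
    constructor
    · rintro ⟨x, hx, rfl⟩
      have h1 := hxq x hx
      have h2 := h1.1
      refine ⟨by simp only [hφ]; positivity, ?_⟩
      simp only [hφ]
      rw [div_lt_div_iff₀ (by positivity) (by norm_num)]
      linarith
    · rintro ⟨hu0, hu1⟩
      have h1 : 0 < 1 - u := by linarith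
      have h2 : 0 < u / (1 - u) := by positivity
      have h3 : u / (1 - u) < 1 := by rw [div_lt_one h1]; linarith
      refine ⟨(u / (1 - u)) ^ (1 / q), ⟨by positivity, Real.rpow_lt_one h2.le h3 ha0⟩, ?_⟩
      simp only [hφ]
      rw [← Real.rpow_mul h2.le, one_div_mul_cancel hq0.ne', Real.rpow_one]
      field_simp
      ring
  have hs1 := (integrableOn_image_iff_integrableOn_abs_deriv_smul measurableSet_Ioo hder hinj
    (fun u => h u + h (1 - u)))
  have hs2 := (integral_image_eq_integral_abs_deriv_smul measurableSet_Ioo hder hinj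
    (fun u => h u + h (1 - u)))
  rw [himg] at hs1 hs2
  have hJ' := hs1.1 hJ
  rw [hV, hbv] at hs2
  have hpt : EqOn (fun x : ℝ => Real.log (x ^ q + 1) / (x ^ q + 1) +
      x ^ (q - 2) * (Real.log (x ^ q + 1) - q * Real.log x) / (x ^ q + 1))
      (fun x => (-(1 / q)) * (|φ' x| • (h (φ x) + h (1 - φ x)))) (Ioo 0 1) := by
    intro x hx
    have ht := (hxq x hx).1
    have hx0 := hx.1
    have e0 : 1 - φ x = 1 / (x ^ q + 1) := by
      simp only [hφ]; field_simp; ring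
    have e1 : Real.log (φ x) = q * Real.log x - Real.log (x ^ q + 1) := by
      simp only [hφ]
      rw [Real.log_div ht.ne' (by positivity), Real.log_rpow hx0]
    have e2 : Real.log (1 - φ x) = - Real.log (x ^ q + 1) := by
      rw [e0, one_div, Real.log_inv]
    have hφp : 0 < φ x := by simp only [hφ]; positivity
    have hφ2 : 0 < 1 - φ x := by rw [e0]; positivity
    have hs : 0 < x ^ q + 1 := by positivity
    have e3 : (φ x) ^ (-(1 / q)) = (x ^ q + 1) ^ (1 / q) * x⁻¹ := by
      simp only [hφ]
      rw [Real.div_rpow ht.le hs.le, ← Real.rpow_mul hx0.le, Real.rpow_neg hs.le]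
      have : q * -(1 / q) = -1 := by field_simp
      rw [this, Real.rpow_neg_one, div_inv_eq_mul]
      ring
    have e4 : (1 - φ x) ^ (1 / q - 1) = (x ^ q + 1) * ((x ^ q + 1) ^ (1 / q))⁻¹ := by
      rw [e0, Real.rpow_sub (by positivity), Real.rpow_one, Real.div_rpow zero_le_one hs.le,
        Real.one_rpow]
      field_simp
    have e5 : (1 - φ x) ^ (-(1 / q)) = (x ^ q + 1) ^ (1 / q) := by
      rw [e0, one_div (x ^ q + 1), Real.inv_rpow hs.le, Real.rpow_neg hs.le, inv_inv]
    have e6 : (φ x) ^ (1 / q - 1) = (x ^ q + 1) * ((x ^ q + 1) ^ (1 / q))⁻¹ * (x * (x ^ q)⁻¹) := by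
      rw [Real.rpow_sub hφp, Real.rpow_one]
      simp only [hφ]
      rw [Real.div_rpow ht.le hs.le, ← Real.rpow_mul hx0.le, mul_one_div_cancel hq0.ne',
        Real.rpow_one]
      field_simp
    have e7 : x ^ (q - 1) = x ^ q * x⁻¹ := by
      rw [Real.rpow_sub hx0, Real.rpow_one]; rfl
    have e8 : x ^ (q - 2) = x ^ q * x⁻¹ * x⁻¹ := by
      rw [Real.rpow_sub hx0, Real.rpow_two]; field_simp
    have e9 : |φ' x| = φ' x := abs_of_pos (by simp only [hφ']; positivity)
    have hP : 0 < (x ^ q + 1) ^ (1 / q) := by positivity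
    simp only [hh, smul_eq_mul]
    rw [e9, sub_sub_cancel, e1, e2, e3, e4, e5, e6]
    simp only [hφ']
    rw [e7, e8]
    generalize (x ^ q + 1) ^ (1 / q) = P at *
    generalize Real.log (x ^ q + 1) = L at *
    generalize Real.log x = l at *
    clear_value φ φ' h
    clear e1 e2 e3 e4 e5 e6 e7 e8 e9 e0
    generalize x ^ q = t at *
    field_simp
    ring
  refine ⟨?_, ?_⟩
  · rw [integrableOn_congr_fun hpt measurableSet_Ioo]
    exact Integrable.const_mul hJ' _
  · rw [setIntegral_congr_fun measurableSet_Ioo hpt, integral_const_mul, ← hs2,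
      Real.Gamma_mul_Gamma_one_sub, mul_one_div]
    field_simp

theorem integral_log_rpow_one (q : ℝ) (hq : 1 < q) :
    (∫ x in (0:ℝ)..1, (x ^ (q - 2) + 1) * Real.log (x ^ q + 1) / (x ^ q + 1)) =
      (1 / (4 * q)) * (trigamma ((2 * q - 1) / (2 * q)) - trigamma ((q - 1) / (2 * q)))
      - (Real.pi / (q * Real.sin (Real.pi / q))) * (digamma (1 - 1 / q) - digamma 1) := by
  obtain ⟨h1, h2⟩ := aux_C1 hq
  obtain ⟨h3, h4⟩ := aux_D hq
  rw [intervalIntegral.integral_of_le zero_le_one, integral_Ioc_eq_integral_Ioo]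
  have : ∀ x : ℝ, (x ^ (q - 2) + 1) * Real.log (x ^ q + 1) / (x ^ q + 1) =
      (Real.log (x ^ q + 1) / (x ^ q + 1) +
      x ^ (q - 2) * (Real.log (x ^ q + 1) - q * Real.log x) / (x ^ q + 1)) -
      q * (x ^ (q - 2) * (-Real.log x) / (x ^ q + 1)) := by
    intro x; ring
  simp only [this]
  rw [integral_sub h3 (Integrable.const_mul h1 q), h4, integral_const_mul, h2]
  have : q ≠ 0 := by linarith
  field_simp
  ring
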